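/- For every p > 0 there is a constant C'_p > 0 such that for every N ≥ 2, if U is an N × N random unitary matrix distributed according to Haar measure on U(N), then E[ ((N/log N) · d_K(μ_N, ν))^{2p} ] ≤ C'_p; that is, the sequence (N/log N) · d_K(μ_N, ν) is bounded in L_{2p}. -/

import Mathlib

open MeasureTheory Real Filter

noncomputable section

/-- The Borel σ-algebra on the unitary group `U(N)`. -/
instance (N : ℕ) : MeasurableSpace (Matrix.unitaryGroup (Fin N) ℂ) := borel _

instance (N : ℕ) : BorelSpace (Matrix.unitaryGroup (Fin N) ℂ) := ⟨rfl⟩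

/-- The eigenvalue angles (in `[0, 2π)`, with multiplicity) of a unitary matrix `U`:
the arguments of the roots of the characteristic polynomial, shifted to lie in `[0, 2π)`. -/
def eigenAngles (N : ℕ) (U : Matrix.unitaryGroup (Fin N) ℂ) : Multiset ℝ :=
  ((U : Matrix (Fin N) (Fin N) ℂ).charpoly.roots).map
    (fun z => if 0 ≤ Complex.arg z then Complex.arg z else Complex.arg z + 2 * π)

open Classical in
/-- `𝒩_A`: the number of eigenvalue angles of `U` lying in the set `A`. -/
def countAngles (N : ℕ) (U : Matrix.unitaryGroup (Fin N) ℂ) (A : Set ℝ) : ℕ :=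
  Multiset.card ((eigenAngles N U).filter (· ∈ A))

/-- `𝒩_θ`: the number of eigenvalue angles of `U` in `[0, θ]`. -/
def countFun (N : ℕ) (U : Matrix.unitaryGroup (Fin N) ℂ) (θ : ℝ) : ℕ :=
  countAngles N U (Set.Icc 0 θ)

/-- The Kolmogorov distance between the empirical spectral measure of `U` and the
uniform measure on the circle: `sup_{0 ≤ θ < 2π} |𝒩_θ/N - θ/(2π)|`. -/
def dK (N : ℕ) (U : Matrix.unitaryGroup (Fin N) ℂ) : ℝ :=
  ⨆ θ : Set.Ico (0:ℝ) (2 * π), |(countFun N U θ : ℝ) / N - (θ : ℝ) / (2 * π)|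

/-- `max_{1 ≤ k ≤ N} |𝒩_{2πk/N} - k|`. -/
def maxDev (N : ℕ) (U : Matrix.unitaryGroup (Fin N) ℂ) : ℝ :=
  ⨆ k : (Finset.Icc 1 N : Finset ℕ), |(countFun N U (2 * π * (k : ℕ) / N) : ℝ) - ((k : ℕ) : ℝ)|

end

/-!
With `Im log det (1 - U) = ∑ⱼ arg (1 - e^{iθⱼ})`, rotating by `e^{-iθ}` shifts every argument by
`-θ/2` and adds a jump `π` for each eigenangle in `[0, θ]`, so that almost surely
`π (𝒩_θ - Nθ/2π) = Im log det (1 - e^{-iθ} U) - Im log det (1 - U)`.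

The exponential moments of `Im log det (1 - U)` are computed by peeling off one coordinate at a
time. Multiply a Haar unitary `U` on the left by a Haar unitary `V` on all coordinates but one, `l`.
Then `Im log det (1 - VU) = arg (1 - U_ll) + Im log det (1 - VW)`, where `1 - VW` is a Schur
complement and the unitary matrix `W` depends only on `U`; the branches of the logarithm agree by
a homotopy. Since `E Im U_ll = 0` and `E |U_ll|² = 1/n`, passing from `n - 1` to `n` multiplies
`E exp (± Im log det (1 - U))` by at most `1 + O(1/n)`, and the product of these factors is
polynomial in `N`. Summing over `N` grid angles, `E exp (N d_K)` is polynomial in `N` as well,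
which bounds every moment of `(N / log N) d_K` uniformly in `N`.
-/

section LogDet

open Matrix Polynomial
open scoped unitInterval

variable {n : Type*} [Fintype n] [DecidableEq n]

section AlgClosed

variable {K : Type*} [Field K]

theorem mem_roots_charpoly_iff {A : Matrix n n K} {z : K} :
    z ∈ A.charpoly.roots ↔ z ∈ spectrum K A := by
  rw [Matrix.mem_spectrum_iff_isRoot_charpoly, mem_roots A.charpoly_monic.ne_zero]

variable [IsAlgClosed K]

theorem card_roots_charpoly (A : Matrix n n K) :
    Multiset.card A.charpoly.roots = Fintype.card n := by
  rw [← (IsAlgClosed.splits A.charpoly).natDegree_eq_card_roots, A.charpoly_natDegree_eq_dim]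

theorem det_smul_one_sub_smul (A : Matrix n n K) (a b : K) :
    (a • (1 : Matrix n n K) - b • A).det = (A.charpoly.roots.map fun z => a - b * z).prod := by
  obtain rfl | hb := eq_or_ne b 0
  · simp [card_roots_charpoly]
  have eval_charpoly : A.charpoly.eval (a / b) = (A.charpoly.roots.map fun z => a / b - z).prod :=
    (IsAlgClosed.splits A.charpoly).eval_eq_prod_roots_of_monic A.charpoly_monic _
  calc (a • (1 : Matrix n n K) - b • A).det
      = (b • (scalar n (a / b) - A)).det := by
        rw [smul_sub, scalar_apply, ← smul_one_eq_diagonal, smul_smul, mul_div_cancel₀ a hb]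
    _ = (A.charpoly.roots.map fun _ => b).prod
          * (A.charpoly.roots.map fun z => a / b - z).prod := by
        rw [det_smul, ← Matrix.eval_charpoly, eval_charpoly, Multiset.map_const',
          Multiset.prod_replicate, card_roots_charpoly]
    _ = (A.charpoly.roots.map fun z => a - b * z).prod := by
        simp only [← Multiset.prod_map_mul, mul_sub, mul_div_cancel₀ a hb]

theorem roots_charpoly_smul_one_add_smul (A : Matrix n n K) (a b : K) :
    (a • (1 : Matrix n n K) + b • A).charpoly.roots = A.charpoly.roots.map fun z => a + b * z := by
  suffices h : (a • (1 : Matrix n n K) + b • A).charpoly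
      = ((A.charpoly.roots.map fun z => a + b * z).map fun z => X - C z).prod by
    rw [h, roots_multiset_prod_X_sub_C]
  refine Polynomial.funext fun w => ?_
  rw [Matrix.eval_charpoly, scalar_apply, ← smul_one_eq_diagonal, ← sub_sub, ← sub_smul,
    det_smul_one_sub_smul, eval_multiset_prod, Multiset.map_map, Multiset.map_map]
  simp only [Function.comp_apply, eval_sub, eval_X, eval_C, sub_sub]

end AlgClosed

/-- The sum of the principal logarithms of the eigenvalues of `A`, with multiplicity: the branch of
`log det A` that is continuous as long as no eigenvalue meets the negative real axis. -/
noncomputable def logDet (A : Matrix n n ℂ) : ℂ := (A.charpoly.roots.map Complex.log).sum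

theorem exp_logDet {A : Matrix n n ℂ} (hA : A.det ≠ 0) : Complex.exp (logDet A) = A.det := by
  rw [Matrix.det_eq_prod_roots_charpoly] at hA ⊢
  rw [logDet, Complex.exp_multiset_sum, Multiset.map_map]
  refine congrArg Multiset.prod ((Multiset.map_congr rfl fun z hz => ?_).trans (Multiset.map_id _))
  exact Complex.exp_log fun hz0 => hA (Multiset.prod_eq_zero (hz0 ▸ hz))

theorem logDet_one : logDet (1 : Matrix n n ℂ) = 0 := by
  have h := roots_charpoly_smul_one_add_smul (0 : Matrix n n ℂ) 1 0
  simp only [one_smul, smul_zero, add_zero, zero_mul] at h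
  simp [logDet, h]

theorem logDet_smul_one_add_smul (A : Matrix n n ℂ) (a b : ℂ) :
    logDet (a • (1 : Matrix n n ℂ) + b • A)
      = (A.charpoly.roots.map fun z => Complex.log (a + b * z)).sum := by
  rw [logDet, roots_charpoly_smul_one_add_smul, Multiset.map_map]
  rfl

theorem det_ne_zero_of_spectrum_subset_slitPlane {A : Matrix n n ℂ}
    (hA : spectrum ℂ A ⊆ Complex.slitPlane) : A.det ≠ 0 := by
  rw [Matrix.det_eq_prod_roots_charpoly]
  exact Multiset.prod_ne_zero fun h0 =>
    Complex.zero_notMem_slitPlane (hA (mem_roots_charpoly_iff.1 h0))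

theorem segment_one_mem_slitPlane {z : ℂ} (hz : z ∈ Complex.slitPlane) (t : I) :
    ((1 - t : ℝ) : ℂ) + ((t : ℝ) : ℂ) * z ∈ Complex.slitPlane := by
  have h := Complex.starConvex_one_slitPlane hz (sub_nonneg.2 t.2.2) t.2.1
    (sub_add_cancel 1 (t : ℝ))
  simpa [Complex.real_smul] using h

theorem spectrum_segment_one_subset_slitPlane {A : Matrix n n ℂ}
    (hA : spectrum ℂ A ⊆ Complex.slitPlane) (t : I) :
    spectrum ℂ (((1 - t : ℝ) : ℂ) • (1 : Matrix n n ℂ) + ((t : ℝ) : ℂ) • A)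
      ⊆ Complex.slitPlane := by
  intro w hw
  rw [← mem_roots_charpoly_iff, roots_charpoly_smul_one_add_smul, Multiset.mem_map] at hw
  obtain ⟨z, hz, rfl⟩ := hw
  exact segment_one_mem_slitPlane (hA (mem_roots_charpoly_iff.1 hz)) t

theorem continuous_logDet_segment_one {A : Matrix n n ℂ}
    (hA : spectrum ℂ A ⊆ Complex.slitPlane) :
    Continuous fun t : I =>
      logDet (((1 - t : ℝ) : ℂ) • (1 : Matrix n n ℂ) + ((t : ℝ) : ℂ) • A) := by
  simp only [logDet_smul_one_add_smul]
  refine continuous_multiset_sum _ fun z hz => Continuous.clog (by fun_prop) fun t => ?_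
  exact segment_one_mem_slitPlane (hA (mem_roots_charpoly_iff.1 hz)) t

theorem eq_of_exp_eq_exp {X : Type*} [TopologicalSpace X] [PreconnectedSpace X] {f g : X → ℂ}
    (hf : Continuous f) (hg : Continuous g) (hexp : ∀ x, Complex.exp (f x) = Complex.exp (g x))
    {x₀ : X} (h₀ : f x₀ = g x₀) : f = g :=
  Complex.isCoveringMap_exp.eq_of_comp_eq hf hg (funext fun x => Subtype.ext (hexp x)) x₀ h₀

theorem continuous_of_continuous_exp {X : Type*} [TopologicalSpace X] {G : I × X → ℂ}
    (hexp : Continuous fun q => Complex.exp (G q)) (hpath : ∀ x, Continuous fun t => G (t, x))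
    (hzero : ∀ x, G (0, x) = 0) : Continuous G := by
  let H : C(I × X, {z : ℂ // z ≠ 0}) :=
    ⟨fun q => ⟨Complex.exp (G q), Complex.exp_ne_zero _⟩, hexp.subtype_mk _⟩
  have lift_eq := (Complex.isCoveringMap_exp.eq_liftHomotopy_iff (H := H) (f := 0)
    (fun x => Subtype.ext (by simp [H, hzero])) G).2 ⟨hpath, rfl, hzero⟩
  rw [lift_eq]
  exact ContinuousMap.continuous _

/-- Along the segments joining `1` to the `f x`, `logDet` lifts the homotopy `det` through `exp`. -/
theorem continuous_logDet_comp {X : Type*} [TopologicalSpace X] {f : X → Matrix n n ℂ}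
    (hf : Continuous f) (hspec : ∀ x, spectrum ℂ (f x) ⊆ Complex.slitPlane) :
    Continuous fun x => logDet (f x) := by
  let path : I × X → Matrix n n ℂ := fun q =>
    ((1 - q.1 : ℝ) : ℂ) • (1 : Matrix n n ℂ) + ((q.1 : ℝ) : ℂ) • f q.2
  have exp_path (q : I × X) : Complex.exp (logDet (path q)) = (path q).det :=
    exp_logDet (det_ne_zero_of_spectrum_subset_slitPlane
      (spectrum_segment_one_subset_slitPlane (hspec q.2) q.1))
  have continuous_lift : Continuous fun q => logDet (path q) := by
    refine continuous_of_continuous_exp ?_ (fun x => ?_) fun x => by simp [path, logDet_one]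
    · simp only [exp_path]
      exact Continuous.matrix_det (by fun_prop)
    · simpa only [path] using continuous_logDet_segment_one (hspec x)
  simpa [path, Function.comp_def] using continuous_lift.comp (Continuous.prodMk_right (1 : I))

open scoped Matrix.Norms.L2Operator in
theorem spectrum_one_sub_subset_slitPlane {A : Matrix n n ℂ} (hA : ‖A‖ ≤ 1)
    (hdet : (1 - A).det ≠ 0) : spectrum ℂ (1 - A) ⊆ Complex.slitPlane := by
  cases isEmpty_or_nonempty n
  · simp [spectrum.of_subsingleton]
  intro w hw
  have hw₀ : w ≠ 0 := by
    rintro rfl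
    exact spectrum.zero_notMem ℂ ((Matrix.isUnit_iff_isUnit_det _).2 hdet.isUnit) hw
  have one_sub_mem : 1 - w ∈ spectrum ℂ A := by
    rw [← map_one (algebraMap ℂ _), ← spectrum.singleton_sub_eq] at hw
    obtain ⟨_, rfl, z, hz, rfl⟩ := hw
    simpa using hz
  have norm_le : ‖1 - w‖ ≤ 1 := (spectrum.norm_le_norm_of_mem one_sub_mem).trans hA
  refine Complex.mem_slitPlane_iff.2 (Or.inl ?_)
  have hsq : Complex.normSq (1 - w) ≤ 1 := by
    rw [Complex.normSq_eq_norm_sq]; exact pow_le_one₀ (norm_nonneg _) norm_le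
  have hpos : 0 < Complex.normSq w := Complex.normSq_pos.2 hw₀
  simp only [Complex.normSq_apply, Complex.sub_re, Complex.sub_im, Complex.one_re,
    Complex.one_im] at hsq hpos
  nlinarith

open scoped Matrix.Norms.L2Operator in
theorem spectrum_one_sub_unitary_subset_slitPlane {U : Matrix n n ℂ} (hU : U ∈ unitaryGroup n ℂ)
    (hdet : (1 - U).det ≠ 0) : spectrum ℂ (1 - U) ⊆ Complex.slitPlane := by
  refine spectrum_one_sub_subset_slitPlane ?_ hdet
  cases isEmpty_or_nonempty n
  · simp [Subsingleton.elim U 0]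
  · exact (CStarRing.norm_of_mem_unitary hU).le

end LogDet

section SchurComplement

open Matrix
open scoped unitInterval

variable {m n : Type*} [Fintype m] [DecidableEq m] [Fintype n] [DecidableEq n]

section CommRing

variable {R : Type*} [CommRing R] {A : Matrix m m R} {B : Matrix m n R} {C : Matrix n m R}
  {D : Matrix n n R}

/-- The operator obtained from the block matrix `(A B; C D)` by feeding its second output back into
its second input; `1 - feedback A B C D` is the Schur complement of `1 - D` in `1 - (A B; C D)`.
The inverse is the junk value `0` unless `1 - D` is invertible. -/
noncomputable def feedback (A : Matrix m m R) (B : Matrix m n R) (C : Matrix n m R)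
    (D : Matrix n n R) : Matrix m m R :=
  A + B * (1 - D)⁻¹ * C

omit [DecidableEq m] in
theorem feedback_mul_left (E : Matrix m m R) :
    feedback (E * A) (E * B) C D = E * feedback A B C D := by
  simp only [feedback, Matrix.mul_add, Matrix.mul_assoc]

omit [Fintype m] [Fintype n] in
theorem one_sub_fromBlocks :
    1 - fromBlocks A B C D = fromBlocks (1 - A) (-B) (-C) (1 - D) := by
  rw [← fromBlocks_one, sub_eq_add_neg, fromBlocks_neg, fromBlocks_add]
  simp only [sub_eq_add_neg, zero_add]

theorem det_one_sub_fromBlocks (hD : IsUnit (1 - D).det) :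
    (1 - fromBlocks A B C D).det = (1 - D).det * (1 - feedback A B C D).det := by
  let _ := (1 - D).invertibleOfIsUnitDet hD
  rw [one_sub_fromBlocks, det_fromBlocks₂₂, invOf_eq_nonsing_inv, feedback]
  simp only [Matrix.neg_mul, Matrix.mul_neg, neg_neg, sub_sub]

theorem fromBlocks_mul_fromRows_one (hD : IsUnit (1 - D).det) :
    fromBlocks A B C D * fromRows (1 : Matrix m m R) ((1 - D)⁻¹ * C)
      = fromRows (feedback A B C D) ((1 - D)⁻¹ * C) := by
  have hfix : C + D * ((1 - D)⁻¹ * C) = (1 - D)⁻¹ * C := by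
    have h := Matrix.mul_nonsing_inv_cancel_left (1 - D) C hD
    rw [Matrix.sub_mul, Matrix.one_mul, sub_eq_iff_eq_add] at h
    exact h.symm
  rw [fromBlocks_mul_fromRows, Matrix.mul_one, Matrix.mul_one, hfix, feedback, Matrix.mul_assoc]

theorem feedback_mem_unitaryGroup [StarRing R]
    (hU : fromBlocks A B C D ∈ unitaryGroup (m ⊕ n) R) (hD : IsUnit (1 - D).det) :
    feedback A B C D ∈ unitaryGroup m R := by
  set X := (1 - D)⁻¹ * C
  have isometry : (fromRows (feedback A B C D) X)ᴴ * fromRows (feedback A B C D) X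
      = (fromRows (1 : Matrix m m R) X)ᴴ * fromRows (1 : Matrix m m R) X := by
    have hUU : (fromBlocks A B C D)ᴴ * fromBlocks A B C D = 1 := mem_unitaryGroup_iff'.1 hU
    rw [← fromBlocks_mul_fromRows_one hD, conjTranspose_mul, Matrix.mul_assoc,
      ← Matrix.mul_assoc _ _ (fromRows (1 : Matrix m m R) _), hUU, Matrix.one_mul]
  simpa only [mem_unitaryGroup_iff', star_eq_conjTranspose, fromCols_mul_fromRows,
    conjTranspose_fromRows_eq_fromCols_conjTranspose, add_left_inj, conjTranspose_one,
    Matrix.mul_one] using isometry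

end CommRing

variable {A : Matrix m m ℂ} {B : Matrix m n ℂ} {C : Matrix n m ℂ} {D : Matrix n n ℂ}

open scoped ComplexOrder in
/-- If `D v = v` then `B v = 0` because `(A B; C D)` is isometric, so `(0, v)` is fixed. -/
theorem det_one_sub_toBlocks₂₂_ne_zero (hU : fromBlocks A B C D ∈ unitaryGroup (m ⊕ n) ℂ)
    (hdet : (1 - fromBlocks A B C D).det ≠ 0) : (1 - D).det ≠ 0 := by
  contrapose! hdet
  obtain ⟨v, hv, hDv⟩ := exists_mulVec_eq_zero_iff.2 hdet
  rw [sub_mulVec, one_mulVec, sub_eq_zero] at hDv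
  have isometry : Bᴴ * B + Dᴴ * D = 1 := by
    have h := mem_unitaryGroup_iff'.1 hU
    rw [star_eq_conjTranspose, fromBlocks_conjTranspose, fromBlocks_multiply, ← fromBlocks_one,
      fromBlocks_inj] at h
    exact h.2.2.2
  have hBv : B *ᵥ v = 0 := by
    have h := congrArg (fun E => star v ⬝ᵥ E *ᵥ v) isometry
    simp only [add_mulVec, dotProduct_add, ← mulVec_mulVec, dotProduct_mulVec _ Bᴴ,
      dotProduct_mulVec _ Dᴴ, ← star_mulVec, ← hDv, one_mulVec] at h
    exact dotProduct_star_self_eq_zero.1 (by simpa [dotProduct_comm] using h)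
  refine exists_mulVec_eq_zero_iff.1 ⟨Sum.elim 0 v, fun h => hv ?_, ?_⟩
  · simpa using congrArg (· ∘ Sum.inr) h
  · rw [sub_mulVec, one_mulVec, fromBlocks_mulVec, sub_eq_zero]
    simp [hBv, ← hDv]

theorem logDet_fromBlocks_zero₁₂ (A : Matrix m m ℂ) (C : Matrix n m ℂ) (D : Matrix n n ℂ) :
    logDet (fromBlocks A 0 C D) = logDet A + logDet D := by
  rw [logDet, charpoly_fromBlocks_zero₁₂, Polynomial.roots_mul
    (mul_ne_zero A.charpoly_monic.ne_zero D.charpoly_monic.ne_zero), Multiset.map_add,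
    Multiset.sum_add]
  rfl

open scoped Matrix.Norms.L2Operator in
theorem norm_fromBlocks_smul_le_one (hU : fromBlocks A B C D ∈ unitaryGroup (m ⊕ n) ℂ) (r : I) :
    ‖fromBlocks (((r : ℝ) : ℂ) • A) (((r : ℝ) : ℂ) • B) C D‖ ≤ 1 := by
  have hfactor : fromBlocks (((r : ℝ) : ℂ) • A) (((r : ℝ) : ℂ) • B) C D
      = diagonal (Sum.elim (fun _ => ((r : ℝ) : ℂ)) fun _ => 1) * fromBlocks A B C D := by
    rw [← fromBlocks_diagonal, ← smul_one_eq_diagonal, diagonal_one, fromBlocks_multiply]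
    simp
  rw [hfactor, CStarRing.norm_mul_mem_unitary _ hU, l2_opNorm_diagonal,
    pi_norm_le_iff_of_nonneg zero_le_one]
  rintro (i | i)
  · simpa [abs_of_nonneg r.2.1] using r.2.2
  · simp

/-- Shrink the first block row to `0` along `r ↦ diag(r, 1) (A B; C D)`: both sides are continuous
logarithms of `det (1 - diag(r, 1) (A B; C D))`, and they agree at `r = 0`. -/
theorem logDet_one_sub_fromBlocks (hU : fromBlocks A B C D ∈ unitaryGroup (m ⊕ n) ℂ)
    (hdet : (1 - fromBlocks A B C D).det ≠ 0) :
    logDet (1 - fromBlocks A B C D) = logDet (1 - D) + logDet (1 - feedback A B C D) := by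
  have hD := det_one_sub_toBlocks₂₂_ne_zero hU hdet
  have hW : (1 - feedback A B C D).det ≠ 0 := by
    rw [det_one_sub_fromBlocks hD.isUnit] at hdet
    exact right_ne_zero_of_mul hdet
  let M : I → Matrix (m ⊕ n) (m ⊕ n) ℂ := fun r =>
    fromBlocks (((r : ℝ) : ℂ) • A) (((r : ℝ) : ℂ) • B) C D
  let S : I → Matrix m m ℂ := fun r =>
    ((1 - r : ℝ) : ℂ) • (1 : Matrix m m ℂ) + ((r : ℝ) : ℂ) • (1 - feedback A B C D)
  have spectrum_W : spectrum ℂ (1 - feedback A B C D) ⊆ Complex.slitPlane :=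
    spectrum_one_sub_unitary_subset_slitPlane (feedback_mem_unitaryGroup hU hD.isUnit) hW
  have det_S (r : I) : (S r).det ≠ 0 := det_ne_zero_of_spectrum_subset_slitPlane
    (spectrum_segment_one_subset_slitPlane spectrum_W r)
  have det_M (r : I) : (1 - M r).det = (1 - D).det * (S r).det := by
    have hS : S r = 1 - ((r : ℝ) : ℂ) • feedback A B C D := by
      simp only [S, Complex.ofReal_sub, Complex.ofReal_one, sub_smul, one_smul, smul_sub]
      abel
    rw [det_one_sub_fromBlocks hD.isUnit, hS]
    congr 3
    simpa using feedback_mul_left (A := A) (B := B) (C := C) (D := D) (((r : ℝ) : ℂ) • 1)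
  have det_M_ne_zero (r : I) : (1 - M r).det ≠ 0 := det_M r ▸ mul_ne_zero hD (det_S r)
  have continuous_logDet_M : Continuous fun r => logDet (1 - M r) :=
    continuous_logDet_comp
      (continuous_const.sub (Continuous.matrix_fromBlocks (by fun_prop) (by fun_prop)
        (by fun_prop) (by fun_prop)))
      fun r => spectrum_one_sub_subset_slitPlane (norm_fromBlocks_smul_le_one hU r)
        (det_M_ne_zero r)
  have continuous_logDet_S : Continuous fun r => logDet (1 - D) + logDet (S r) :=
    continuous_const.add (continuous_logDet_segment_one spectrum_W)
  have exp_eq (r : I) :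
      Complex.exp (logDet (1 - M r)) = Complex.exp (logDet (1 - D) + logDet (S r)) := by
    rw [Complex.exp_add, exp_logDet (det_M_ne_zero r), exp_logDet hD, exp_logDet (det_S r), det_M]
  have eq_at_zero : logDet (1 - M 0) = logDet (1 - D) + logDet (S 0) := by
    simp [M, S, one_sub_fromBlocks, logDet_fromBlocks_zero₁₂, logDet_one]
  have eq_at_one := congrFun
    (eq_of_exp_eq_exp continuous_logDet_M continuous_logDet_S exp_eq eq_at_zero) 1
  simpa [M, S] using eq_at_one

end SchurComplement

section LeftInvariantMeasure

variable {G X : Type*} [MeasurableSpace G] [Group G] [MeasurableMul₂ G] [MeasurableSpace X]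
  {μ : Measure G} [SFinite μ] [μ.IsMulLeftInvariant] {ν : Measure X} {φ : X → G}

theorem measurePreserving_prod_mul_left [SFinite ν] (hφ : Measurable φ) :
    MeasurePreserving (fun q : X × G => (q.1, φ q.1 * q.2)) (ν.prod μ) (ν.prod μ) :=
  (MeasurePreserving.id ν).skew_product (g := fun x g => φ x * g)
    ((hφ.comp measurable_fst).mul measurable_snd)
    (Eventually.of_forall fun x => map_mul_left_eq_self μ (φ x))

theorem lintegral_lintegral_mul_left [IsProbabilityMeasure ν] (hφ : Measurable φ)
    {f : G → ENNReal} (hf : AEMeasurable f μ) :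
    ∫⁻ g, ∫⁻ x, f (φ x * g) ∂ν ∂μ = ∫⁻ g, f g ∂μ := by
  have hjoint : AEMeasurable (fun q : X × G => f (φ q.1 * q.2)) (ν.prod μ) :=
    (hf.comp_quasiMeasurePreserving Measure.quasiMeasurePreserving_snd).comp_quasiMeasurePreserving
      (measurePreserving_prod_mul_left hφ).quasiMeasurePreserving
  rw [← lintegral_lintegral_swap hjoint]
  simp only [lintegral_mul_left_eq_self, lintegral_const, measure_univ, mul_one]

theorem ae_mem_of_forall_ae_mul_mem [SFinite ν] [NeZero ν] (hφ : Measurable φ) {s : Set G}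
    (hs : MeasurableSet s) (h : ∀ g, ∀ᵐ x ∂ν, φ x * g ∈ s) : ∀ᵐ g ∂μ, g ∈ s := by
  have hjoint : MeasurableSet {q : X × G | φ q.1 * q.2 ∈ s} :=
    ((hφ.comp measurable_fst).mul measurable_snd) hs
  have hswap : ∀ᵐ x ∂ν, ∀ᵐ g ∂μ, φ x * g ∈ s :=
    (Measure.ae_ae_comm hjoint).2 (Eventually.of_forall h)
  obtain ⟨x, hx⟩ := hswap.exists
  exact (eventually_mul_left_iff μ (φ x)).1 hx

end LeftInvariantMeasure

section Moments

variable {Ω : Type*} [MeasurableSpace Ω] {q κ L A : ℝ}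

theorem rpow_le_mul_exp (hq : 0 < q) (hκ : 0 < κ) {y : ℝ} (hy : 0 ≤ y) :
    y ^ q ≤ (q / κ) ^ q * exp (κ * y) := by
  have hqκ : 0 < q / κ := div_pos hq hκ
  have div_le_exp : y / (q / κ) ≤ exp (y / (q / κ)) := by
    linarith [add_one_le_exp (y / (q / κ))]
  calc y ^ q = (q / κ) ^ q * (y / (q / κ)) ^ q := by
        rw [← mul_rpow hqκ.le (by positivity), mul_div_cancel₀ _ hqκ.ne']
    _ ≤ (q / κ) ^ q * exp (y / (q / κ)) ^ q := by gcongr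
    _ = (q / κ) ^ q * exp (κ * y) := by
        rw [← exp_mul]
        congr 2
        field_simp

theorem rpow_le_add_mul_exp (hq : 0 < q) (hκ : 0 < κ) (hκL : κ ≤ L) (hA : 0 ≤ A) {y : ℝ}
    (hy : 0 ≤ y) :
    y ^ q ≤ A ^ q + (q / κ) ^ q * exp (κ * A) * exp (-(L * A)) * exp (L * y) := by
  obtain hyA | hAy := le_total y A
  · exact (rpow_le_rpow hy hyA hq.le).trans (le_add_of_nonneg_right (by positivity))
  calc y ^ q ≤ (q / κ) ^ q * exp (κ * y) := rpow_le_mul_exp hq hκ hy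
    _ ≤ (q / κ) ^ q * exp (κ * A + -(L * A) + L * y) := by
        gcongr
        nlinarith [mul_nonneg (sub_nonneg.2 hκL) (sub_nonneg.2 hAy)]
    _ = (q / κ) ^ q * exp (κ * A) * exp (-(L * A)) * exp (L * y) := by
        rw [exp_add, exp_add]
        ring
    _ ≤ _ := le_add_of_nonneg_left (by positivity)

theorem integral_rpow_le_of_lintegral_exp_le {μ : Measure Ω} [IsProbabilityMeasure μ] {Y : Ω → ℝ}
    (hq : 0 < q) (hκ : 0 < κ) (hκL : κ ≤ L) (hA : 0 ≤ A) (hY : ∀ ω, 0 ≤ Y ω)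
    (hexp : ∫⁻ ω, ENNReal.ofReal (exp (L * Y ω)) ∂μ ≤ ENNReal.ofReal (exp (L * A))) :
    ∫ ω, Y ω ^ q ∂μ ≤ A ^ q + (q / κ) ^ q * exp (κ * A) := by
  set c : ℝ := (q / κ) ^ q * exp (κ * A) * exp (-(L * A)) with hc
  have hc₀ : 0 ≤ c := by positivity
  have hAq : 0 ≤ A ^ q := rpow_nonneg hA q
  have enorm_le (ω : Ω) :
      ‖Y ω ^ q‖ₑ ≤ ENNReal.ofReal (A ^ q) + ENNReal.ofReal c * ENNReal.ofReal (exp (L * Y ω)) := by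
    rw [Real.enorm_of_nonneg (rpow_nonneg (hY ω) q), ← ENNReal.ofReal_mul hc₀,
      ← ENNReal.ofReal_add hAq (by positivity)]
    exact ENNReal.ofReal_le_ofReal (rpow_le_add_mul_exp hq hκ hκL hA (hY ω))
  have c_mul_exp : c * exp (L * A) = (q / κ) ^ q * exp (κ * A) := by
    rw [hc, mul_assoc, ← exp_add, neg_add_cancel, exp_zero, mul_one]
  have enorm_integral_le : ‖∫ ω, Y ω ^ q ∂μ‖ₑ
      ≤ ENNReal.ofReal (A ^ q + (q / κ) ^ q * exp (κ * A)) := by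
    calc ‖∫ ω, Y ω ^ q ∂μ‖ₑ ≤ ∫⁻ ω, ‖Y ω ^ q‖ₑ ∂μ := enorm_integral_le_lintegral_enorm _
      _ ≤ ∫⁻ ω, ENNReal.ofReal (A ^ q) + ENNReal.ofReal c * ENNReal.ofReal (exp (L * Y ω)) ∂μ :=
          lintegral_mono enorm_le
      _ ≤ ENNReal.ofReal (A ^ q) + ENNReal.ofReal c * ENNReal.ofReal (exp (L * A)) := by
          rw [lintegral_add_left measurable_const, lintegral_const, measure_univ, mul_one,
            lintegral_const_mul' _ _ ENNReal.ofReal_ne_top]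
          gcongr
      _ = ENNReal.ofReal (A ^ q + (q / κ) ^ q * exp (κ * A)) := by
          rw [← ENNReal.ofReal_mul hc₀, c_mul_exp, ← ENNReal.ofReal_add hAq (by positivity)]
  rw [Real.enorm_of_nonneg (integral_nonneg fun ω => rpow_nonneg (hY ω) q)] at enorm_integral_le
  exact (ENNReal.ofReal_le_ofReal_iff (by positivity)).1 enorm_integral_le

end Moments

section ArgOneSub

theorem exp_mul_arg_one_sub_le_of_norm_le_half {ε : ℝ} (hε : |ε| ≤ 1) {w : ℂ} (hw : ‖w‖ ≤ 1 / 2) :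
    exp (ε * (1 - w).arg) ≤ 1 - ε * w.im + 28 * ‖w‖ ^ 2 := by
  have norm_log_add : ‖Complex.log (1 - w) + w‖ ≤ ‖w‖ ^ 2 := by
    have h := Complex.norm_log_one_add_sub_self_le (z := -w) (by rw [norm_neg]; linarith)
    rw [norm_neg, ← sub_eq_add_neg, sub_neg_eq_add] at h
    have inv_le_two : (1 - ‖w‖)⁻¹ ≤ 2 := (inv_le_comm₀ (by linarith) two_pos).2 (by linarith)
    nlinarith [sq_nonneg ‖w‖]
  have mul_le {x y : ℝ} (h : |x| ≤ y) : |ε * x| ≤ y := by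
    rw [abs_mul]
    exact (mul_le_of_le_one_left (abs_nonneg x) hε).trans h
  have first_order : |ε * (1 - w).arg + ε * w.im| ≤ ‖w‖ ^ 2 := by
    have him := (Complex.abs_im_le_norm _).trans norm_log_add
    rw [Complex.add_im, Complex.log_im] at him
    rw [← mul_add]
    exact mul_le him
  have linear := mul_le (Complex.abs_im_le_norm w)
  set x := ε * (1 - w).arg
  have abs_x : |x| ≤ 3 / 2 * ‖w‖ := by
    have := abs_sub_abs_le_abs_sub x (-(ε * w.im))
    rw [abs_neg, sub_neg_eq_add] at this
    nlinarith [norm_nonneg w]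
  have exp_le := (abs_le.1 (abs_exp_sub_one_sub_id_le (x := x) (by linarith))).2
  have sq_le : x ^ 2 ≤ (3 / 2 * ‖w‖) ^ 2 := sq_le_sq' (by linarith [neg_le_of_abs_le abs_x])
    (le_of_abs_le abs_x)
  nlinarith [le_of_abs_le first_order]

theorem exp_mul_arg_one_sub_le {ε : ℝ} (hε : |ε| ≤ 1) {w : ℂ} (hw : ‖w‖ ≤ 1) :
    exp (ε * (1 - w).arg) ≤ 1 - ε * w.im + 28 * ‖w‖ ^ 2 := by
  obtain hsmall | hlarge := le_or_gt ‖w‖ (1 / 2)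
  · exact exp_mul_arg_one_sub_le_of_norm_le_half hε hsmall
  have arg_le : |(1 - w).arg| ≤ π / 2 := by
    rw [Complex.abs_arg_le_pi_div_two_iff, Complex.sub_re, Complex.one_re, sub_nonneg]
    exact (Complex.re_le_norm w).trans hw
  have exponent_le : ε * (1 - w).arg ≤ 2 := by
    have h : |ε * (1 - w).arg| ≤ 1 * (π / 2) := by
      rw [abs_mul]
      exact mul_le_mul hε arg_le (abs_nonneg _) zero_le_one
    linarith [le_of_abs_le h, pi_lt_four]
  have exp_two_le : exp 2 ≤ 15 / 2 := by
    have h : exp 2 = exp 1 ^ 2 := by rw [← exp_nat_mul]; norm_num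
    nlinarith [exp_one_lt_d9, exp_pos 1]
  have im_le : ε * w.im ≤ ‖w‖ := by
    refine (le_abs_self _).trans ?_
    rw [abs_mul]
    exact (mul_le_of_le_one_left (abs_nonneg _) hε).trans (Complex.abs_im_le_norm w)
  nlinarith [exp_le_exp.2 exponent_le]

end ArgOneSub

section UnitaryGroup

open Matrix

variable {n : Type*} [Fintype n] [DecidableEq n]

instance : SecondCountableTopology (unitaryGroup n ℂ) :=
  inferInstanceAs (SecondCountableTopology
    {U : n → n → ℂ // U ∈ (unitaryGroup n ℂ : Set (Matrix n n ℂ))})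

instance : CompactSpace (unitaryGroup n ℂ) := by
  refine isCompact_iff_compactSpace.1 (IsCompact.of_isClosed_subset
    (isCompact_univ_pi fun _ => isCompact_univ_pi fun _ => isCompact_closedBall (0 : ℂ) 1)
    (isClosed_unitary (R := Matrix n n ℂ)) fun U hU i _ j _ => ?_)
  exact mem_closedBall_zero_iff.2 (entry_norm_bound_of_unitary hU i j)

theorem continuous_unitary_apply (i j : n) :
    Continuous fun U : unitaryGroup n ℂ => (U : Matrix n n ℂ) i j :=
  (continuous_apply_apply i j).comp continuous_subtype_val

theorem sum_norm_sq_apply (U : unitaryGroup n ℂ) (j : n) :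
    ∑ i, ‖(U : Matrix n n ℂ) i j‖ ^ 2 = 1 := by
  have h := congrFun (congrFun (mem_unitaryGroup_iff'.1 U.2) j) j
  simp only [mul_apply, one_apply_eq, star_apply, Complex.star_def, Complex.conj_mul'] at h
  exact_mod_cast h

theorem isOpen_setOf_det_one_sub_ne_zero :
    IsOpen {U : unitaryGroup n ℂ | (1 - (U : Matrix n n ℂ)).det ≠ 0} :=
  isOpen_ne_fun (Continuous.matrix_det (by fun_prop)) continuous_const

variable (n) in
/-- The scalar unitary matrix `e^{iθ}`, which rotates all eigenvalues by the angle `θ`. -/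
noncomputable def scalarRotation (θ : ℝ) : unitaryGroup n ℂ :=
  ⟨Complex.exp (θ * Complex.I) • 1, by
    rw [mem_unitaryGroup_iff, star_smul, star_one, smul_mul_smul_comm, mul_one, Complex.star_def,
      Complex.mul_conj, Complex.normSq_eq_norm_sq, Complex.norm_exp_ofReal_mul_I]
    simp⟩

theorem coe_scalarRotation_mul (θ : ℝ) (U : unitaryGroup n ℂ) :
    ((scalarRotation n θ * U : unitaryGroup n ℂ) : Matrix n n ℂ)
      = Complex.exp (θ * Complex.I) • (U : Matrix n n ℂ) :=
  smul_one_mul _ _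

theorem scalarRotation_zero : scalarRotation n 0 = 1 :=
  Subtype.ext (by simp [scalarRotation])

theorem continuous_scalarRotation : Continuous (scalarRotation n) :=
  Continuous.subtype_mk (by fun_prop) _

/-- The imaginary part of the branch `logDet` of `log det (1 - U)`, whose increments under scalar
rotations count eigenvalue angles. -/
noncomputable def argDet (U : unitaryGroup n ℂ) : ℝ := (logDet (1 - (U : Matrix n n ℂ))).im

theorem argDet_scalarRotation_mul (θ : ℝ) (U : unitaryGroup n ℂ) :
    argDet (scalarRotation n θ * U) = ((U : Matrix n n ℂ).charpoly.roots.map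
      fun z => (1 - Complex.exp (θ * Complex.I) * z).arg).sum := by
  have h := logDet_smul_one_add_smul (U : Matrix n n ℂ) 1 (-Complex.exp (θ * Complex.I))
  simp only [one_smul, neg_smul, neg_mul, ← sub_eq_add_neg] at h
  rw [argDet, coe_scalarRotation_mul, h]
  refine (map_multiset_sum Complex.imAddGroupHom _).trans ?_
  simp [Complex.log_im]

theorem argDet_eq_sum_arg (U : unitaryGroup n ℂ) :
    argDet U = ((U : Matrix n n ℂ).charpoly.roots.map fun z => (1 - z).arg).sum := by
  have h := argDet_scalarRotation_mul 0 U
  simpa [scalarRotation_zero] using h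

theorem continuousOn_argDet :
    ContinuousOn argDet {U : unitaryGroup n ℂ | (1 - (U : Matrix n n ℂ)).det ≠ 0} := by
  rw [continuousOn_iff_continuous_domRestrict]
  refine Complex.continuous_im.comp (continuous_logDet_comp (by fun_prop) fun U => ?_)
  exact spectrum_one_sub_unitary_subset_slitPlane U.1.2 U.2

theorem det_one_sub_scalarRotation_mul (θ : ℝ) (U : unitaryGroup n ℂ) :
    (1 - ((scalarRotation n θ * U : unitaryGroup n ℂ) : Matrix n n ℂ)).det
      = ((U : Matrix n n ℂ).charpoly.roots.map
        fun z => 1 - Complex.exp (θ * Complex.I) * z).prod := by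
  rw [coe_scalarRotation_mul, ← det_smul_one_sub_smul, one_smul]

theorem ae_det_one_sub_scalarRotation_mul_ne_zero (U : unitaryGroup n ℂ) :
    ∀ᵐ θ : ℝ, (1 - ((scalarRotation n θ * U : unitaryGroup n ℂ) : Matrix n n ℂ)).det ≠ 0 := by
  let inverses : Set ℂ := {w | w⁻¹ ∈ (U : Matrix n n ℂ).charpoly.roots}
  have inverses_countable : inverses.Countable :=
    ((Multiset.finite_toSet _).preimage inv_injective.injOn).countable
  have preimage_countable : {θ : ℝ | Complex.exp (θ * Complex.I) ∈ inverses}.Countable :=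
    inverses_countable.preimage_cexp.preimage fun θ θ' h => by simpa using h
  filter_upwards [preimage_countable.ae_notMem volume] with θ hθ hdet
  rw [det_one_sub_scalarRotation_mul, Multiset.prod_eq_zero_iff, Multiset.mem_map] at hdet
  obtain ⟨z, hz, hzero⟩ := hdet
  have inv_eq : (Complex.exp (θ * Complex.I))⁻¹ = z :=
    inv_eq_of_mul_eq_one_right (sub_eq_zero.1 hzero).symm
  exact hθ (show _⁻¹ ∈ _ from inv_eq ▸ hz)

section Measure

variable [MeasurableSpace (unitaryGroup n ℂ)] [BorelSpace (unitaryGroup n ℂ)]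
  {μ : Measure (unitaryGroup n ℂ)}

variable [μ.IsMulLeftInvariant]

theorem ae_det_one_sub_ne_zero [SFinite μ] :
    ∀ᵐ U : unitaryGroup n ℂ ∂μ, (1 - (U : Matrix n n ℂ)).det ≠ 0 :=
  ae_mem_of_forall_ae_mul_mem (ν := volume) continuous_scalarRotation.measurable
    isOpen_setOf_det_one_sub_ne_zero.measurableSet ae_det_one_sub_scalarRotation_mul_ne_zero

theorem aemeasurable_argDet [SFinite μ] : AEMeasurable argDet μ := by
  let regular : Set (unitaryGroup n ℂ) := {U | (1 - (U : Matrix n n ℂ)).det ≠ 0}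
  have hregular : ∀ᵐ U ∂μ, U ∈ regular := ae_det_one_sub_ne_zero
  rw [← Measure.restrict_eq_self_of_ae_mem hregular]
  exact continuousOn_argDet.aemeasurable isOpen_setOf_det_one_sub_ne_zero.measurableSet

theorem integral_im_apply [SFinite μ] (i j : n) :
    ∫ U : unitaryGroup n ℂ, ((U : Matrix n n ℂ) i j).im ∂μ = 0 := by
  have h := integral_mul_left_eq_self (μ := μ)
    (fun U : unitaryGroup n ℂ => ((U : Matrix n n ℂ) i j).im) (scalarRotation n π)
  simp only [coe_scalarRotation_mul, Complex.exp_pi_mul_I, neg_smul, one_smul, Matrix.neg_apply,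
    Complex.neg_im, integral_neg] at h
  linarith

theorem integral_norm_sq_apply_eq (i k j : n) :
    ∫ U : unitaryGroup n ℂ, ‖(U : Matrix n n ℂ) i j‖ ^ 2 ∂μ
      = ∫ U : unitaryGroup n ℂ, ‖(U : Matrix n n ℂ) k j‖ ^ 2 ∂μ := by
  let P : unitaryGroup n ℂ := ⟨(Equiv.swap i k).permMatrix ℂ, by
    rw [mem_unitaryGroup_iff, star_eq_conjTranspose, conjTranspose_permMatrix, ← permMatrix_mul,
      inv_mul_cancel, permMatrix_one]⟩
  rw [← integral_mul_left_eq_self _ P]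
  refine integral_congr_ae (Eventually.of_forall fun U => ?_)
  have hPU : ((P * U : unitaryGroup n ℂ) : Matrix n n ℂ) i j = (U : Matrix n n ℂ) k j := by
    change ((Equiv.swap i k).permMatrix ℂ * (U : Matrix n n ℂ)) i j = _
    rw [Equiv.Perm.permMatrix, PEquiv.toMatrix_toPEquiv_mul]
    simp
  simp only [hPU]

theorem integral_norm_sq_apply [IsProbabilityMeasure μ] (i j : n) :
    ∫ U : unitaryGroup n ℂ, ‖(U : Matrix n n ℂ) i j‖ ^ 2 ∂μ = 1 / Fintype.card n := by
  have integrable_entry (k : n) :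
      Integrable (fun U : unitaryGroup n ℂ => ‖(U : Matrix n n ℂ) k j‖ ^ 2) μ :=
    ((continuous_unitary_apply k j).norm.pow 2).integrable_of_hasCompactSupport (.of_compactSpace _)
  have hsum : ∑ k, ∫ U : unitaryGroup n ℂ, ‖(U : Matrix n n ℂ) k j‖ ^ 2 ∂μ = 1 := by
    rw [← integral_finsetSum _ fun k _ => integrable_entry k]
    simp only [sum_norm_sq_apply, integral_const, probReal_univ, one_smul]
  simp only [integral_norm_sq_apply_eq _ i j, Finset.sum_const, Finset.card_univ,
    nsmul_eq_mul] at hsum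
  exact eq_one_div_of_mul_eq_one_right hsum

theorem lintegral_exp_arg_one_sub_apply_le [IsProbabilityMeasure μ] {ε : ℝ} (hε : |ε| ≤ 1)
    (i : n) :
    ∫⁻ U : unitaryGroup n ℂ, ENNReal.ofReal (exp (ε * (1 - (U : Matrix n n ℂ) i i).arg)) ∂μ
      ≤ ENNReal.ofReal (1 + 28 / Fintype.card n) := by
  let bound : unitaryGroup n ℂ → ℝ := fun U =>
    1 - ε * ((U : Matrix n n ℂ) i i).im + 28 * ‖(U : Matrix n n ℂ) i i‖ ^ 2
  have exp_le_bound (U : unitaryGroup n ℂ) :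
      exp (ε * (1 - (U : Matrix n n ℂ) i i).arg) ≤ bound U :=
    exp_mul_arg_one_sub_le hε (entry_norm_bound_of_unitary U.2 i i)
  have integrable_im :
      Integrable (fun U : unitaryGroup n ℂ => ((U : Matrix n n ℂ) i i).im) μ :=
    (Complex.continuous_im.comp (continuous_unitary_apply i i)).integrable_of_hasCompactSupport
      (.of_compactSpace _)
  have integrable_norm_sq :
      Integrable (fun U : unitaryGroup n ℂ => ‖(U : Matrix n n ℂ) i i‖ ^ 2) μ :=
    ((continuous_unitary_apply i i).norm.pow 2).integrable_of_hasCompactSupport (.of_compactSpace _)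
  have integrable_linear :
      Integrable (fun U : unitaryGroup n ℂ => 1 - ε * ((U : Matrix n n ℂ) i i).im) μ :=
    (integrable_const 1).sub (integrable_im.const_mul ε)
  have integrable_bound : Integrable bound μ :=
    integrable_linear.add (integrable_norm_sq.const_mul 28)
  have integral_bound : ∫ U, bound U ∂μ = 1 + 28 / Fintype.card n := by
    rw [integral_add integrable_linear (integrable_norm_sq.const_mul 28),
      integral_sub (integrable_const 1) (integrable_im.const_mul ε), integral_const_mul,
      integral_const_mul, integral_im_apply, integral_norm_sq_apply]
    simp [div_eq_mul_inv]
  rw [← integral_bound, ofReal_integral_eq_lintegral_ofReal integrable_bound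
    (Eventually.of_forall fun U => (exp_pos _).le.trans (exp_le_bound U))]
  exact lintegral_mono fun U => ENNReal.ofReal_le_ofReal (exp_le_bound U)

end Measure

end UnitaryGroup

section BlockEmbedding

open Matrix

variable {m k n : Type*} [Fintype m] [DecidableEq m] [Fintype k] [DecidableEq k] [Fintype n]
  [DecidableEq n]

theorem logDet_submatrix_equiv (e : m ≃ n) (A : Matrix n n ℂ) :
    logDet (A.submatrix e e) = logDet A := by
  rw [logDet, logDet, ← charpoly_reindex e.symm A]
  rfl

theorem logDet_of_unique [Unique k] (A : Matrix k k ℂ) :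
    logDet A = Complex.log (A default default) := by
  rw [logDet, charpoly, det_unique, charmatrix_apply_eq, Polynomial.roots_X_sub_C,
    Multiset.map_singleton, Multiset.sum_singleton]

omit [Fintype m] [Fintype n] in
theorem one_sub_submatrix_equiv (e : m ≃ n) (A : Matrix n n ℂ) :
    1 - A.submatrix e e = (1 - A).submatrix e e := by
  rw [submatrix_sub, Pi.sub_apply, Pi.sub_apply, submatrix_one_equiv]

theorem submatrix_equiv_mem_unitaryGroup (e : m ≃ n) {A : Matrix n n ℂ}
    (hA : A ∈ unitaryGroup n ℂ) : A.submatrix e e ∈ unitaryGroup m ℂ := by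
  rw [mem_unitaryGroup_iff, star_eq_conjTranspose, conjTranspose_submatrix, submatrix_mul_equiv,
    ← star_eq_conjTranspose, mem_unitaryGroup_iff.1 hA, submatrix_one_equiv]

theorem fromBlocks_one_mem_unitaryGroup (V : unitaryGroup m ℂ) :
    fromBlocks (V : Matrix m m ℂ) 0 0 (1 : Matrix k k ℂ) ∈ unitaryGroup (m ⊕ k) ℂ := by
  rw [mem_unitaryGroup_iff, star_eq_conjTranspose, fromBlocks_conjTranspose, fromBlocks_multiply]
  simp [← star_eq_conjTranspose]

/-- The unitary matrix acting as `V` on the coordinates in `m` and trivially on those in `k`, where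
`e` splits the coordinates `n` into `m` and `k`. -/
noncomputable def blockEmbed (e : m ⊕ k ≃ n) (V : unitaryGroup m ℂ) : unitaryGroup n ℂ :=
  ⟨(fromBlocks (V : Matrix m m ℂ) 0 0 (1 : Matrix k k ℂ)).submatrix e.symm e.symm,
    submatrix_equiv_mem_unitaryGroup e.symm (fromBlocks_one_mem_unitaryGroup V)⟩

theorem continuous_blockEmbed (e : m ⊕ k ≃ n) : Continuous (blockEmbed e) :=
  Continuous.subtype_mk ((Continuous.matrix_fromBlocks continuous_subtype_val continuous_const
    continuous_const continuous_const).matrix_submatrix _ _) _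

theorem coe_blockEmbed_mul_submatrix (e : m ⊕ k ≃ n) (V : unitaryGroup m ℂ)
    (U : unitaryGroup n ℂ) {A : Matrix m m ℂ} {B : Matrix m k ℂ} {C : Matrix k m ℂ}
    {D : Matrix k k ℂ} (hU : (U : Matrix n n ℂ).submatrix e e = fromBlocks A B C D) :
    ((blockEmbed e V * U : unitaryGroup n ℂ) : Matrix n n ℂ).submatrix e e
      = fromBlocks ((V : Matrix m m ℂ) * A) ((V : Matrix m m ℂ) * B) C D := by
  change ((fromBlocks (V : Matrix m m ℂ) 0 0 (1 : Matrix k k ℂ)).submatrix e.symm e.symm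
    * (U : Matrix n n ℂ)).submatrix e e = _
  rw [← submatrix_mul_equiv _ _ e e e, hU, submatrix_submatrix, e.symm_comp_self, submatrix_id_id,
    fromBlocks_multiply]
  simp

theorem argDet_mul_comm (U V : unitaryGroup n ℂ) : argDet (U * V) = argDet (V * U) := by
  rw [argDet_eq_sum_arg, argDet_eq_sum_arg, Submonoid.coe_mul, Submonoid.coe_mul,
    charpoly_mul_comm]

theorem exists_argDet_blockEmbed_mul [Unique k] (e : m ⊕ k ≃ n) {U : unitaryGroup n ℂ}
    (hU : (1 - (U : Matrix n n ℂ)).det ≠ 0) :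
    ∃ W : unitaryGroup m ℂ, ∀ V : unitaryGroup m ℂ,
      (1 - ((W * V : unitaryGroup m ℂ) : Matrix m m ℂ)).det ≠ 0 →
        argDet (blockEmbed e V * U)
          = (1 - (U : Matrix n n ℂ) (e (Sum.inr default)) (e (Sum.inr default))).arg
            + argDet (W * V) := by
  obtain ⟨A, B, C, D, hblocks⟩ : ∃ A B C D,
      (U : Matrix n n ℂ).submatrix e e = fromBlocks A B C D :=
    ⟨_, _, _, _, (fromBlocks_toBlocks _).symm⟩
  have hunitary : fromBlocks A B C D ∈ unitaryGroup (m ⊕ k) ℂ :=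
    hblocks ▸ submatrix_equiv_mem_unitaryGroup e U.2
  have hdet : (1 - fromBlocks A B C D).det ≠ 0 := by
    rwa [← hblocks, one_sub_submatrix_equiv, det_submatrix_equiv_self]
  have hD := det_one_sub_toBlocks₂₂_ne_zero hunitary hdet
  refine ⟨⟨feedback A B C D, feedback_mem_unitaryGroup hunitary hD.isUnit⟩, fun V hWV => ?_⟩
  have hproduct := coe_blockEmbed_mul_submatrix e V U hblocks
  have hVU : fromBlocks ((V : Matrix m m ℂ) * A) ((V : Matrix m m ℂ) * B) C D
      ∈ unitaryGroup (m ⊕ k) ℂ :=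
    hproduct ▸ submatrix_equiv_mem_unitaryGroup e (blockEmbed e V * U).2
  have hdetVU : (1 - fromBlocks ((V : Matrix m m ℂ) * A) ((V : Matrix m m ℂ) * B) C D).det ≠ 0 := by
    rw [det_one_sub_fromBlocks hD.isUnit, feedback_mul_left]
    exact mul_ne_zero hD ((det_one_sub_mul_comm _ _).trans_ne hWV)
  have hcorner : D default default
      = (U : Matrix n n ℂ) (e (Sum.inr default)) (e (Sum.inr default)) :=
    (congrFun (congrFun hblocks (Sum.inr default)) (Sum.inr default)).symm
  rw [argDet, ← logDet_submatrix_equiv e, ← one_sub_submatrix_equiv, hproduct,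
    logDet_one_sub_fromBlocks hVU hdetVU, feedback_mul_left, logDet_of_unique, Complex.add_im,
    Complex.log_im, Matrix.sub_apply, one_apply_eq, hcorner, argDet_mul_comm]
  rfl

end BlockEmbedding

section ExponentialMoment

open Matrix

variable {m k n : Type*} [Fintype m] [DecidableEq m] [Unique k] [Fintype n] [DecidableEq n]
  [MeasurableSpace (unitaryGroup m ℂ)] [BorelSpace (unitaryGroup m ℂ)]

theorem lintegral_exp_argDet_blockEmbed_mul (e : m ⊕ k ≃ n) (ε : ℝ)
    {ν : Measure (unitaryGroup m ℂ)} [SFinite ν] [ν.IsMulLeftInvariant] {U : unitaryGroup n ℂ}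
    (hU : (1 - (U : Matrix n n ℂ)).det ≠ 0) :
    ∫⁻ V, ENNReal.ofReal (exp (ε * argDet (blockEmbed e V * U))) ∂ν
      = ENNReal.ofReal
          (exp (ε * (1 - (U : Matrix n n ℂ) (e (Sum.inr default)) (e (Sum.inr default))).arg))
        * ∫⁻ V, ENNReal.ofReal (exp (ε * argDet V)) ∂ν := by
  obtain ⟨W, hW⟩ := exists_argDet_blockEmbed_mul e hU
  rw [← lintegral_mul_left_eq_self (fun V => ENNReal.ofReal (exp (ε * argDet V))) W,
    ← lintegral_const_mul' _ _ ENNReal.ofReal_ne_top]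
  refine lintegral_congr_ae ?_
  filter_upwards [(eventually_mul_left_iff ν W).2 ae_det_one_sub_ne_zero] with V hWV
  rw [hW V hWV, mul_add, exp_add, ENNReal.ofReal_mul (exp_pos _).le]

variable [MeasurableSpace (unitaryGroup n ℂ)] [BorelSpace (unitaryGroup n ℂ)]

theorem aemeasurable_exp_argDet (ε : ℝ) {μ : Measure (unitaryGroup n ℂ)} [SFinite μ]
    [μ.IsMulLeftInvariant] : AEMeasurable (fun U => ENNReal.ofReal (exp (ε * argDet U))) μ :=
  (aemeasurable_argDet.const_mul ε).exp.ennreal_ofReal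

theorem lintegral_exp_argDet_le_mul (e : m ⊕ k ≃ n) {ε : ℝ} (hε : |ε| ≤ 1)
    (μ : Measure (unitaryGroup n ℂ)) [IsProbabilityMeasure μ] [μ.IsMulLeftInvariant]
    (ν : Measure (unitaryGroup m ℂ)) [IsProbabilityMeasure ν] [ν.IsMulLeftInvariant] :
    ∫⁻ U, ENNReal.ofReal (exp (ε * argDet U)) ∂μ
      ≤ ENNReal.ofReal (1 + 28 / Fintype.card n)
        * ∫⁻ V, ENNReal.ofReal (exp (ε * argDet V)) ∂ν := by
  let corner : n := e (Sum.inr default)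
  have measurable_corner : Measurable fun U : unitaryGroup n ℂ =>
      ENNReal.ofReal (exp (ε * (1 - (U : Matrix n n ℂ) corner corner).arg)) :=
    ((Complex.measurable_arg.comp (measurable_const.sub
      (continuous_unitary_apply corner corner).measurable)).const_mul ε).exp.ennreal_ofReal
  calc ∫⁻ U, ENNReal.ofReal (exp (ε * argDet U)) ∂μ
      = ∫⁻ U, ∫⁻ V, ENNReal.ofReal (exp (ε * argDet (blockEmbed e V * U))) ∂ν ∂μ :=
        (lintegral_lintegral_mul_left (continuous_blockEmbed e).measurable
          (aemeasurable_exp_argDet ε)).symm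
    _ = ∫⁻ U : unitaryGroup n ℂ,
          ENNReal.ofReal (exp (ε * (1 - (U : Matrix n n ℂ) corner corner).arg))
            * ∫⁻ V, ENNReal.ofReal (exp (ε * argDet V)) ∂ν ∂μ := by
        refine lintegral_congr_ae ?_
        filter_upwards [ae_det_one_sub_ne_zero] with U hU
        exact lintegral_exp_argDet_blockEmbed_mul e ε hU
    _ ≤ _ := by
        rw [lintegral_mul_const _ measurable_corner]
        exact mul_le_mul_left (lintegral_exp_arg_one_sub_apply_le hε corner) _

theorem lintegral_exp_argDet_le_harmonic {ε : ℝ} (hε : |ε| ≤ 1) (N : ℕ)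
    (μ : Measure (unitaryGroup (Fin N) ℂ)) [IsProbabilityMeasure μ] [μ.IsMulLeftInvariant] :
    ∫⁻ U, ENNReal.ofReal (exp (ε * argDet U)) ∂μ ≤ ENNReal.ofReal (exp (28 * harmonic N)) := by
  induction N with
  | zero =>
    have argDet_eq_zero (U : unitaryGroup (Fin 0) ℂ) : argDet U = 0 := by
      rw [argDet, Subsingleton.elim (1 - (U : Matrix (Fin 0) (Fin 0) ℂ)) 1, logDet_one,
        Complex.zero_im]
    simp [argDet_eq_zero]
  | succ N ih =>
    let haar : Measure (unitaryGroup (Fin N) ℂ) := Measure.haarMeasure ⊤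
    have : IsProbabilityMeasure haar := ⟨Measure.haarMeasure_self⟩
    have one_add_le : 1 + 28 / ((N + 1 : ℕ) : ℝ) ≤ exp (28 / ((N + 1 : ℕ) : ℝ)) := by
      linarith [add_one_le_exp (28 / ((N + 1 : ℕ) : ℝ))]
    calc ∫⁻ U, ENNReal.ofReal (exp (ε * argDet U)) ∂μ
        ≤ ENNReal.ofReal (1 + 28 / Fintype.card (Fin (N + 1)))
            * ∫⁻ V, ENNReal.ofReal (exp (ε * argDet V)) ∂haar :=
          lintegral_exp_argDet_le_mul finSumFinEquiv hε μ haar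
      _ ≤ ENNReal.ofReal (exp (28 / ((N + 1 : ℕ) : ℝ)))
            * ENNReal.ofReal (exp (28 * harmonic N)) := by
          rw [Fintype.card_fin]
          exact mul_le_mul' (ENNReal.ofReal_le_ofReal one_add_le) (ih haar)
      _ = ENNReal.ofReal (exp (28 * harmonic (N + 1))) := by
          rw [← ENNReal.ofReal_mul (exp_pos _).le, ← exp_add, harmonic_succ]
          push_cast
          ring_nf

theorem lintegral_exp_argDet_le {ε : ℝ} (hε : |ε| ≤ 1) (N : ℕ)
    (μ : Measure (unitaryGroup (Fin N) ℂ)) [IsProbabilityMeasure μ] [μ.IsMulLeftInvariant] :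
    ∫⁻ U, ENNReal.ofReal (exp (ε * argDet U)) ∂μ
      ≤ ENNReal.ofReal (exp (28 * (1 + log N))) := by
  refine (lintegral_exp_argDet_le_harmonic hε N μ).trans (ENNReal.ofReal_le_ofReal ?_)
  gcongr
  exact harmonic_le_one_add_log N

end ExponentialMoment

section Angles

open Matrix

/-- The argument of `z` in `[0, 2π)`, the branch used by `eigenAngles`. -/
noncomputable def circleAngle (z : ℂ) : ℝ := if 0 ≤ z.arg then z.arg else z.arg + 2 * π

theorem circleAngle_nonneg (z : ℂ) : 0 ≤ circleAngle z := by
  rw [circleAngle]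
  split_ifs with h
  · exact h
  · linarith [z.neg_pi_lt_arg, pi_pos]

theorem circleAngle_lt_two_pi (z : ℂ) : circleAngle z < 2 * π := by
  rw [circleAngle]
  split_ifs
  · linarith [z.arg_le_pi, pi_pos]
  · linarith

theorem exp_circleAngle_mul_I {z : ℂ} (hz : ‖z‖ = 1) :
    Complex.exp (circleAngle z * Complex.I) = z := by
  have h := Complex.norm_mul_exp_arg_mul_I z
  rw [hz, Complex.ofReal_one, one_mul] at h
  rw [circleAngle]
  split_ifs
  · exact h
  · rw [Complex.ofReal_add, add_mul, Complex.exp_add, h]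
    simp

theorem one_sub_exp_mul_I (ψ : ℝ) :
    1 - Complex.exp (ψ * Complex.I) = ((2 * sin (ψ / 2) : ℝ) : ℂ)
      * (Complex.cos (((ψ - π) / 2 : ℝ) : ℂ)
        + Complex.sin (((ψ - π) / 2 : ℝ) : ℂ) * Complex.I) := by
  obtain ⟨x, rfl⟩ : ∃ x, ψ = 2 * x := ⟨ψ / 2, by ring⟩
  have half_sub_pi : (2 * x - π) / 2 = x - π / 2 := by ring
  rw [mul_div_cancel_left₀ x two_ne_zero, half_sub_pi, Complex.exp_mul_I]
  simp only [← Complex.ofReal_cos, ← Complex.ofReal_sin, cos_sub_pi_div_two, sin_sub_pi_div_two,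
    cos_two_mul', cos_sq', sin_two_mul]
  push_cast
  ring

theorem arg_one_sub_exp_mul_I {ψ : ℝ} (h₀ : 0 < ψ) (h₁ : ψ < 2 * π) :
    (1 - Complex.exp (ψ * Complex.I)).arg = (ψ - π) / 2 := by
  have hsin : 0 < sin (ψ / 2) := sin_pos_of_pos_of_lt_pi (by linarith) (by linarith)
  rw [one_sub_exp_mul_I, Complex.arg_mul_cos_add_sin_mul_I (by linarith)
    ⟨by linarith, by linarith⟩]

theorem arg_one_sub_exp_neg_mul {z : ℂ} (hz : ‖z‖ = 1) (hz₁ : z ≠ 1) {θ : ℝ}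
    (hzθ : Complex.exp ((-θ : ℝ) * Complex.I) * z ≠ 1) (h₀ : 0 ≤ θ) (h₁ : θ < 2 * π) :
    (1 - Complex.exp ((-θ : ℝ) * Complex.I) * z).arg
      = (1 - z).arg - θ / 2 + if circleAngle z ≤ θ then π else 0 := by
  have hexp := exp_circleAngle_mul_I hz
  have hlt := circleAngle_lt_two_pi z
  have hpos : 0 < circleAngle z := by
    refine (circleAngle_nonneg z).lt_of_ne fun h => hz₁ ?_
    rw [← hexp, ← h, Complex.ofReal_zero, zero_mul, Complex.exp_zero]
  have arg_one_sub : (1 - z).arg = (circleAngle z - π) / 2 := by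
    conv_lhs => rw [← hexp]
    exact arg_one_sub_exp_mul_I hpos hlt
  have rotated : Complex.exp ((-θ : ℝ) * Complex.I) * z
      = Complex.exp ((circleAngle z - θ : ℝ) * Complex.I) := by
    conv_lhs => rw [← hexp]
    rw [← Complex.exp_add, ← add_mul, ← Complex.ofReal_add, neg_add_eq_sub]
  rw [rotated] at hzθ ⊢
  rw [arg_one_sub]
  split_ifs with hle
  · have hne : circleAngle z ≠ θ := fun h => hzθ (by simp [h])
    have hlt' := hle.lt_of_ne hne
    have shift : Complex.exp ((circleAngle z - θ : ℝ) * Complex.I)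
        = Complex.exp ((circleAngle z - θ + 2 * π : ℝ) * Complex.I) := by
      rw [Complex.ofReal_add (circleAngle z - θ), add_mul, Complex.exp_add]
      simp
    rw [shift, arg_one_sub_exp_mul_I (by linarith) (by linarith)]
    ring
  · rw [arg_one_sub_exp_mul_I (by linarith) (by linarith)]
    ring

theorem sum_map_sub_add_ite {α : Type*} (s : Multiset α) (f : α → ℝ) (c d : ℝ) (p : α → Prop)
    [DecidablePred p] :
    (s.map fun a => f a - c + if p a then d else 0).sum
      = (s.map f).sum - s.card * c + d * s.countP p := by
  induction s using Multiset.induction_on with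
  | empty => simp
  | cons a s ih =>
    rw [Multiset.map_cons, Multiset.sum_cons, ih, Multiset.map_cons, Multiset.sum_cons,
      Multiset.card_cons, Multiset.countP_cons]
    split_ifs <;> push_cast <;> ring

variable {N : ℕ} (U : unitaryGroup (Fin N) ℂ)

theorem countFun_eq_countP (θ : ℝ) :
    countFun N U θ = (U : Matrix (Fin N) (Fin N) ℂ).charpoly.roots.countP (circleAngle · ≤ θ) := by
  classical
  have hangles : eigenAngles N U
      = (U : Matrix (Fin N) (Fin N) ℂ).charpoly.roots.map circleAngle := rfl
  rw [countFun, countAngles, hangles, ← Multiset.countP_eq_card_filter, Multiset.countP_map,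
    Multiset.countP_eq_card_filter]
  simp only [Set.mem_Icc, circleAngle_nonneg, true_and]

open scoped Matrix.Norms.L2Operator in
theorem norm_eq_one_of_mem_roots_charpoly {z : ℂ}
    (hz : z ∈ (U : Matrix (Fin N) (Fin N) ℂ).charpoly.roots) : ‖z‖ = 1 :=
  mem_sphere_zero_iff_norm.1 (Unitary.spectrum_subset_circle U (mem_roots_charpoly_iff.1 hz))

theorem exp_mul_ne_one_of_mem_roots_charpoly {θ : ℝ}
    (hdet : (1 - ((scalarRotation (Fin N) θ * U : unitaryGroup (Fin N) ℂ) :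
      Matrix (Fin N) (Fin N) ℂ)).det ≠ 0) {z : ℂ}
    (hz : z ∈ (U : Matrix (Fin N) (Fin N) ℂ).charpoly.roots) :
    Complex.exp (θ * Complex.I) * z ≠ 1 := by
  rw [det_one_sub_scalarRotation_mul] at hdet
  exact fun h => hdet (Multiset.prod_eq_zero (Multiset.mem_map.2 ⟨z, hz, sub_eq_zero.2 h.symm⟩))

theorem argDet_scalarRotation_neg_mul {θ : ℝ} (h₀ : 0 ≤ θ) (h₁ : θ < 2 * π)
    (hdet : (1 - (U : Matrix (Fin N) (Fin N) ℂ)).det ≠ 0)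
    (hdetθ : (1 - ((scalarRotation (Fin N) (-θ) * U : unitaryGroup (Fin N) ℂ) :
      Matrix (Fin N) (Fin N) ℂ)).det ≠ 0) :
    argDet (scalarRotation (Fin N) (-θ) * U)
      = argDet U - N * (θ / 2) + π * countFun N U θ := by
  have ne_one {z : ℂ} (hz : z ∈ (U : Matrix (Fin N) (Fin N) ℂ).charpoly.roots) : z ≠ 1 := by
    rw [← one_mul U, ← scalarRotation_zero] at hdet
    simpa using exp_mul_ne_one_of_mem_roots_charpoly U hdet hz
  rw [argDet_scalarRotation_mul, argDet_eq_sum_arg, countFun_eq_countP,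
    Multiset.map_congr rfl fun z hz => arg_one_sub_exp_neg_mul
      (norm_eq_one_of_mem_roots_charpoly U hz) (ne_one hz)
      (exp_mul_ne_one_of_mem_roots_charpoly U hdetθ hz) h₀ h₁,
    sum_map_sub_add_ite, card_roots_charpoly, Fintype.card_fin]

end Angles

section Discretization

open Matrix

variable {N : ℕ} (U : unitaryGroup (Fin N) ℂ)

theorem countFun_mono : Monotone (countFun N U) := by
  intro θ θ' h
  simp only [countFun_eq_countP, Multiset.countP_eq_card_filter]
  exact Multiset.card_le_card (Multiset.monotone_filter_right _ fun _ hz => hz.trans h)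

theorem countFun_two_pi : countFun N U (2 * π) = N := by
  rw [countFun_eq_countP, Multiset.countP_eq_card.2 fun z _ => (circleAngle_lt_two_pi z).le,
    card_roots_charpoly, Fintype.card_fin]

theorem abs_countFun_sub_le_maxDev {k : ℕ} (hk : k ∈ Finset.Icc 1 N) :
    |(countFun N U (2 * π * k / N) : ℝ) - k| ≤ maxDev N U :=
  le_ciSup (f := fun k : Finset.Icc 1 N => |(countFun N U (2 * π * (k : ℕ) / N) : ℝ) - (k : ℕ)|)
    (Set.finite_range _).bddAbove ⟨k, hk⟩

theorem maxDev_nonneg : 0 ≤ maxDev N U := iSup_nonneg fun _ => abs_nonneg _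

theorem dK_nonneg : 0 ≤ dK N U := iSup_nonneg fun _ => abs_nonneg _

theorem abs_countFun_sub_le_maxDev_add_one (hN : 0 < N) {x : ℝ} (h₀ : 0 ≤ x) (h₁ : x < N) :
    |(countFun N U (2 * π * x / N) : ℝ) - x| ≤ maxDev N U + 1 := by
  have grid_mono {y z : ℝ} (h : y ≤ z) :
      (countFun N U (2 * π * y / N) : ℝ) ≤ countFun N U (2 * π * z / N) :=
    Nat.cast_le.2 (countFun_mono U (by gcongr))
  have floor_le := Nat.floor_le h₀
  have lt_floor := Nat.lt_floor_add_one x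
  have floor_lt : ⌊x⌋₊ < N := (Nat.floor_lt h₀).2 h₁
  have upper := (abs_le.1 (abs_countFun_sub_le_maxDev U
    (Finset.mem_Icc.2 ⟨Nat.le_add_left 1 ⌊x⌋₊, floor_lt⟩))).2
  have lower : (⌊x⌋₊ : ℝ) - maxDev N U ≤ countFun N U (2 * π * ⌊x⌋₊ / N) := by
    obtain hzero | hpos := Nat.eq_zero_or_pos ⌊x⌋₊
    · rw [hzero, Nat.cast_zero]
      linarith [maxDev_nonneg U, Nat.cast_nonneg (α := ℝ) (countFun N U (2 * π * 0 / N))]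
    · linarith [(abs_le.1 (abs_countFun_sub_le_maxDev U
        (Finset.mem_Icc.2 ⟨hpos, floor_lt.le⟩))).1]
  push_cast at upper
  rw [abs_le]
  constructor <;> linarith [grid_mono floor_le, grid_mono lt_floor.le]

theorem mul_dK_le_maxDev_add_one (hN : 0 < N) : N * dK N U ≤ maxDev N U + 1 := by
  have hN' : (0 : ℝ) < N := Nat.cast_pos.2 hN
  have : Nonempty (Set.Ico (0 : ℝ) (2 * π)) := ⟨⟨0, le_rfl, two_pi_pos⟩⟩
  rw [← le_div_iff₀' hN']
  refine ciSup_le fun ⟨θ, h₀, h₁⟩ => ?_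
  set x : ℝ := N * (θ / (2 * π)) with hx
  have angle_eq : 2 * π * x / N = θ := by rw [hx]; field_simp
  have x_lt : x < N := mul_lt_of_lt_one_right hN' ((div_lt_one two_pi_pos).2 h₁)
  have h := abs_countFun_sub_le_maxDev_add_one U hN (by positivity) x_lt
  rwa [angle_eq, hx, ← mul_div_cancel₀ (countFun N U θ : ℝ) hN'.ne', ← mul_sub, abs_mul,
    abs_of_pos hN', ← le_div_iff₀' hN'] at h

/-- The rotation by `-2πk/N`, which moves the `k`-th grid angle to `0`. -/
noncomputable def gridRotation (N k : ℕ) : unitaryGroup (Fin N) ℂ :=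
  scalarRotation (Fin N) (-(2 * π * k / N))

theorem gridRotation_zero : gridRotation N 0 = 1 := by
  simp [gridRotation, scalarRotation_zero]

variable {U}

theorem maxDev_le_of_forall_abs_argDet_le (hN : 0 < N) {K : ℝ}
    (hdet : ∀ k < N, (1 - ((gridRotation N k * U : unitaryGroup (Fin N) ℂ) :
      Matrix (Fin N) (Fin N) ℂ)).det ≠ 0)
    (hK : ∀ k < N, |argDet (gridRotation N k * U)| ≤ K) : maxDev N U ≤ K := by
  have hN' : (0 : ℝ) < N := Nat.cast_pos.2 hN
  have hdet₀ := hdet 0 hN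
  have hK₀ := hK 0 hN
  rw [gridRotation_zero, one_mul] at hdet₀ hK₀
  have : Nonempty (Finset.Icc 1 N) := ⟨⟨1, Finset.mem_Icc.2 ⟨le_rfl, hN⟩⟩⟩
  refine ciSup_le fun ⟨k, hk⟩ => ?_
  obtain rfl | hkN := (Finset.mem_Icc.1 hk).2.eq_or_lt
  · rw [mul_div_cancel_right₀ _ hN'.ne', countFun_two_pi, sub_self, abs_zero]
    exact (abs_nonneg _).trans hK₀
  have angle_lt : 2 * π * k / N < 2 * π :=
    (div_lt_iff₀ hN').2 (mul_lt_mul_of_pos_left (Nat.cast_lt.2 hkN) two_pi_pos)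
  have argDet_sub : π * ((countFun N U (2 * π * k / N) : ℝ) - k)
      = argDet (gridRotation N k * U) - argDet U := by
    rw [gridRotation, argDet_scalarRotation_neg_mul U (by positivity) angle_lt hdet₀ (hdet k hkN)]
    field_simp
    ring
  have pi_mul_le : π * |(countFun N U (2 * π * k / N) : ℝ) - k| ≤ K + K := by
    rw [← abs_of_pos pi_pos, ← abs_mul, abs_of_pos pi_pos, argDet_sub]
    exact (abs_sub _ _).trans (add_le_add (hK k hkN) hK₀)
  nlinarith [two_le_pi, abs_nonneg ((countFun N U (2 * π * k / N) : ℝ) - k)]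

theorem exp_mul_dK_le (hN : 0 < N)
    (hdet : ∀ k < N, (1 - ((gridRotation N k * U : unitaryGroup (Fin N) ℂ) :
      Matrix (Fin N) (Fin N) ℂ)).det ≠ 0) :
    exp (N * dK N U) ≤ exp 1 * ∑ q ∈ Finset.range N ×ˢ ({1, -1} : Finset ℝ),
      exp (q.2 * argDet (gridRotation N q.1 * U)) := by
  obtain ⟨k, hk, hmax⟩ := (Finset.range N).exists_max_image
    (fun k => |argDet (gridRotation N k * U)|) ⟨0, Finset.mem_range.2 hN⟩
  have maxDev_le := maxDev_le_of_forall_abs_argDet_le hN hdet fun j hj =>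
    hmax j (Finset.mem_range.2 hj)
  have exponent_le : N * dK N U ≤ 1 + |argDet (gridRotation N k * U)| := by
    linarith [mul_dK_le_maxDev_add_one U hN]
  obtain ⟨ε, hε, abs_eq⟩ : ∃ ε ∈ ({1, -1} : Finset ℝ),
      |argDet (gridRotation N k * U)| = ε * argDet (gridRotation N k * U) := by
    obtain h | h := abs_choice (argDet (gridRotation N k * U))
    · exact ⟨1, by simp, by rw [h, one_mul]⟩
    · exact ⟨-1, by simp, by rw [h, neg_one_mul]⟩
  calc exp (N * dK N U) ≤ exp (1 + ε * argDet (gridRotation N k * U)) :=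
        exp_le_exp.2 (abs_eq ▸ exponent_le)
    _ = exp 1 * exp (ε * argDet (gridRotation N k * U)) := exp_add _ _
    _ ≤ _ := by
        gcongr
        exact Finset.single_le_sum (f := fun q : ℕ × ℝ =>
          exp (q.2 * argDet (gridRotation N q.1 * U))) (fun q _ => (exp_pos _).le)
          (Finset.mk_mem_product hk hε)

end Discretization

section KolmogorovExponentialMoment

open Matrix

variable {N : ℕ} (μ : Measure (unitaryGroup (Fin N) ℂ)) [IsProbabilityMeasure μ]
  [μ.IsMulLeftInvariant]

theorem ae_forall_det_one_sub_gridRotation_mul_ne_zero :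
    ∀ᵐ U ∂μ, ∀ k < N, (1 - ((gridRotation N k * U : unitaryGroup (Fin N) ℂ) :
      Matrix (Fin N) (Fin N) ℂ)).det ≠ 0 := by
  filter_upwards [ae_all_iff.2 fun k =>
    (eventually_mul_left_iff μ (gridRotation N k)).2 ae_det_one_sub_ne_zero] with U hU k _
  exact hU k

theorem lintegral_sum_exp_argDet_gridRotation_mul_le :
    ∫⁻ U, ∑ q ∈ Finset.range N ×ˢ ({1, -1} : Finset ℝ),
        ENNReal.ofReal (exp (q.2 * argDet (gridRotation N q.1 * U))) ∂μ
      ≤ ENNReal.ofReal (N * 2 * exp (28 * (1 + log N))) := by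
  have abs_sign_le {ε : ℝ} (hε : ε ∈ ({1, -1} : Finset ℝ)) : |ε| ≤ 1 := by
    obtain rfl | rfl : ε = 1 ∨ ε = -1 := by simpa using hε
    all_goals simp
  have card_signs : ({1, -1} : Finset ℝ).card = 2 := Finset.card_pair (by norm_num)
  rw [lintegral_finsetSum' _ fun q _ => (aemeasurable_exp_argDet q.2).comp_quasiMeasurePreserving
    (measurePreserving_mul_left μ (gridRotation N q.1)).quasiMeasurePreserving]
  calc ∑ q ∈ Finset.range N ×ˢ ({1, -1} : Finset ℝ),
        ∫⁻ U, ENNReal.ofReal (exp (q.2 * argDet (gridRotation N q.1 * U))) ∂μ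
      ≤ ∑ _q ∈ Finset.range N ×ˢ ({1, -1} : Finset ℝ),
          ENNReal.ofReal (exp (28 * (1 + log N))) := by
        refine Finset.sum_le_sum fun q hq => ?_
        rw [lintegral_mul_left_eq_self (fun U => ENNReal.ofReal (exp (q.2 * argDet U)))]
        exact lintegral_exp_argDet_le (abs_sign_le (Finset.mem_product.1 hq).2) N μ
    _ = ENNReal.ofReal (N * 2 * exp (28 * (1 + log N))) := by
        rw [Finset.sum_const, Finset.card_product, Finset.card_range, card_signs,
          ← ENNReal.ofReal_nsmul, nsmul_eq_mul, Nat.cast_mul, Nat.cast_ofNat]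

theorem exp_one_mul_exp_log_le {x : ℝ} (hx : 2 ≤ x) :
    exp 1 * (x * 2 * exp (28 * (1 + log x))) ≤ exp (log x * 88) := by
  have log_two_le : log 2 ≤ log x := log_le_log two_pos hx
  calc exp 1 * (x * 2 * exp (28 * (1 + log x)))
      = exp (1 + (log x + log 2 + 28 * (1 + log x))) := by
        rw [exp_add, exp_add, exp_add, exp_log (by linarith), exp_log two_pos]
    _ ≤ exp (log x * 88) := exp_le_exp.2 (by linarith [log_two_gt_d9])

theorem lintegral_exp_mul_dK_le (hN : 2 ≤ N) :
    ∫⁻ U, ENNReal.ofReal (exp (N * dK N U)) ∂μ ≤ ENNReal.ofReal (exp (log N * 88)) := by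
  calc ∫⁻ U, ENNReal.ofReal (exp (N * dK N U)) ∂μ
      ≤ ∫⁻ U, ENNReal.ofReal (exp 1) * ∑ q ∈ Finset.range N ×ˢ ({1, -1} : Finset ℝ),
          ENNReal.ofReal (exp (q.2 * argDet (gridRotation N q.1 * U))) ∂μ := by
        refine lintegral_mono_ae ?_
        filter_upwards [ae_forall_det_one_sub_gridRotation_mul_ne_zero μ] with U hU
        rw [← ENNReal.ofReal_sum_of_nonneg fun q _ => (exp_pos _).le,
          ← ENNReal.ofReal_mul (exp_pos 1).le]
        exact ENNReal.ofReal_le_ofReal (exp_mul_dK_le (zero_lt_two.trans_le hN) hU)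
    _ ≤ ENNReal.ofReal (exp 1) * ENNReal.ofReal (N * 2 * exp (28 * (1 + log N))) := by
        rw [lintegral_const_mul' _ _ ENNReal.ofReal_ne_top]
        gcongr
        exact lintegral_sum_exp_argDet_gridRotation_mul_le μ
    _ ≤ ENNReal.ofReal (exp (log N * 88)) := by
        rw [← ENNReal.ofReal_mul (exp_pos 1).le]
        exact ENNReal.ofReal_le_ofReal (exp_one_mul_exp_log_le (by exact_mod_cast hN))

end KolmogorovExponentialMoment

/-- For every `p > 0` there is `C'_p > 0` such that for every `N ≥ 2` and Haar-distributed `U`,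
`𝔼[((N/log N) d_K(μ_N, ν))^{2p}] ≤ C'_p`; i.e. `(N/log N) d_K(μ_N, ν)` is bounded in `L_{2p}`. -/
theorem normalized_kolmogorov_bounded_in_Lp :
    ∀ p : ℝ, 0 < p → ∃ C : ℝ, 0 < C ∧ ∀ N : ℕ, 2 ≤ N →
      ∀ ℙ : Measure (Matrix.unitaryGroup (Fin N) ℂ),
        IsProbabilityMeasure ℙ → ℙ.IsHaarMeasure →
          ∫ U, (((N : ℝ) / Real.log N) * dK N U) ^ (2 * p) ∂ℙ ≤ C := by
  intro p hp
  refine ⟨88 ^ (2 * p) + (2 * p / (1 / 2)) ^ (2 * p) * exp (1 / 2 * 88), by positivity, ?_⟩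
  intro N hN ℙ _ _
  have half_le_log : 1 / 2 ≤ log N := by
    linarith [log_two_gt_d9, log_le_log two_pos (show (2 : ℝ) ≤ N by exact_mod_cast hN)]
  have log_mul (U : Matrix.unitaryGroup (Fin N) ℂ) : log N * (N / log N * dK N U) = N * dK N U := by
    rw [← mul_assoc, mul_div_cancel₀ _ (by linarith)]
  refine integral_rpow_le_of_lintegral_exp_le (by positivity) one_half_pos half_le_log (by norm_num)
    (fun U => mul_nonneg (by positivity) (dK_nonneg U)) ?_
  simp only [log_mul]
  exact lintegral_exp_mul_dK_le ℙ hN
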